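/- Let h > 0, b_0 > 0, and let u_0 ∈ W^{1,∞}(0,∞) satisfy u_0 ≥ 0, u_0(0) > 0, and u_0 = 0 on [b_0, ∞). Let (W, b) be the classical solution of problem (2.1) with data (h, u_0, b_0), and let (W^∞, b^∞) be the unique steady state of (2.1), i.e. b^∞ = ω is the unique positive root of h = (x/2)·e^{x²/4} and W^∞(η) = h·∫_η^ω e^{−s²/4} ds. Then: (a) b(τ) → b^∞ as τ → ∞; (b) W(·, τ) converges to W^∞ uniformly on [0, β] for every β ∈ (0, b^∞) as τ → ∞; (c) the extension W̃(η, τ), equal to W(η, τ) for η ∈ [0, b(τ)] and 0 for η > b(τ), converges as τ → ∞, uniformly on compact subsets of [0, ∞), to the extension W̃^∞ equal to W^∞ on [0, b^∞] and 0 on (b^∞, ∞). -/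

import Mathlib

/-- `(W, b)` is a classical solution of problem (2.1) with flux `h` and
initial data `(u0, b0)`. -/
def IsClassicalSol21 (h b0 : ℝ) (u0 : ℝ → ℝ) (W : ℝ → ℝ → ℝ) (b : ℝ → ℝ) : Prop :=
  ContDiffOn ℝ 1 b (Set.Ici 0) ∧ b 0 = b0 ∧
  ContinuousOn (fun p : ℝ × ℝ => W p.1 p.2)
    {p : ℝ × ℝ | 0 ≤ p.2 ∧ 0 ≤ p.1 ∧ p.1 ≤ b p.2} ∧
  ContinuousOn (fun p : ℝ × ℝ => deriv (fun y => W y p.2) p.1)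
    {p : ℝ × ℝ | 0 < p.2 ∧ 0 ≤ p.1 ∧ p.1 ≤ b p.2} ∧
  (∀ τ > (0:ℝ), ∀ η, 0 < η → η < b τ →
    DifferentiableAt ℝ (fun σ => W η σ) τ ∧
    DifferentiableAt ℝ (fun y => W y τ) η ∧
    DifferentiableAt ℝ (deriv (fun y => W y τ)) η ∧
    deriv (fun σ => W η σ) τ - deriv (deriv (fun y => W y τ)) η
      - η / 2 * deriv (fun y => W y τ) η = 0) ∧
  (∀ τ > (0:ℝ), -deriv (fun y => W y τ) 0 = h) ∧
  (∀ τ > (0:ℝ), W (b τ) τ = 0) ∧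
  (∀ τ > (0:ℝ), deriv b τ + b τ / 2 = -deriv (fun y => W y τ) (b τ)) ∧
  (∀ η, 0 < η → η < b0 → W η 0 = u0 η)

/-!
Compare `W` with barriers `A t - f x`. If such a barrier satisfies the equation, the flux
condition and the Stefan condition with strict inequalities of the same sense, then `W` can never
touch it: at a first contact time the contact point would be `0`, the free boundary or an interior
point, and each is excluded by one of the three inequalities.

A steep stationary line is a supersolution, hence the free boundary is bounded. On a bounded domain
the steady state, perturbed by a small multiple of a fixed profile and with its zero moved slightly
off `ω`, becomes a strict super- or subsolution, and it remains one after adding a term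
`C exp (-k t)` with `C` so large that it is initially on the right side of `W` and `k` small.
Letting `t → ∞` squeezes `W` onto the steady state, uniformly up to the free boundary. As the steady
state is strictly decreasing and `W` vanishes at the free boundary, the latter converges to `ω`.
-/

open Set Filter Topology

/-! ### One-variable calculus -/

lemma nonpos_of_isLocalMinOn_Icc_right {g : ℝ → ℝ} {a c g' : ℝ} (hac : a < c)
    (hmin : IsLocalMinOn g (Icc a c) c) (hg : HasDerivWithinAt g g' (Icc a c) c) : g' ≤ 0 := by
  have hdir : a - c ∈ posTangentConeAt (Icc a c) c :=
    sub_mem_posTangentConeAt_of_segment_subset (by rw [segment_symm, segment_eq_Icc hac.le])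
  have hnonneg := hmin.hasFDerivWithinAt_nonneg hg.hasFDerivWithinAt hdir
  simp only [ContinuousLinearMap.toSpanSingleton_apply, smul_eq_mul] at hnonneg
  exact nonpos_of_mul_nonneg_right hnonneg (sub_neg.2 hac)

lemma nonneg_of_isLocalMinOn_Icc_left {g : ℝ → ℝ} {a c g' : ℝ} (hac : a < c)
    (hmin : IsLocalMinOn g (Icc a c) a) (hg : HasDerivWithinAt g g' (Icc a c) a) : 0 ≤ g' := by
  have hdir : c - a ∈ posTangentConeAt (Icc a c) a :=
    sub_mem_posTangentConeAt_of_segment_subset (segment_eq_Icc hac.le).le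
  have hnonneg := hmin.hasFDerivWithinAt_nonneg hg.hasFDerivWithinAt hdir
  simp only [ContinuousLinearMap.toSpanSingleton_apply, smul_eq_mul] at hnonneg
  exact nonneg_of_mul_nonneg_right hnonneg (sub_pos.2 hac)

lemma nonneg_second_deriv_of_isLocalMin {g g' : ℝ → ℝ} {x g'' : ℝ} (hmin : IsLocalMin g x)
    (hg : ∀ᶠ y in 𝓝 x, HasDerivAt g (g' y) y) (hg' : HasDerivAt g' g'' x) : 0 ≤ g'' := by
  have hderiv : deriv g =ᶠ[𝓝 x] g' := hg.mono fun _ hy => hy.deriv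
  rw [← hg'.deriv, ← hderiv.deriv_eq]
  by_contra! hneg
  have hmax : IsLocalMax g x :=
    isLocalMax_of_deriv_deriv_neg hneg hmin.deriv_eq_zero hg.self_of_nhds.continuousAt
  have hconst : g =ᶠ[𝓝 x] fun _ => g x := by
    filter_upwards [hmin, hmax] with y hy_ge hy_le using le_antisymm hy_le hy_ge
  have hzero : deriv (deriv g) x = 0 := by
    rw [hconst.deriv.deriv_eq]
    simp
  exact hneg.ne hzero

lemma hasDerivWithinAt_Icc_left_of_continuousOn_deriv {g : ℝ → ℝ} {a c : ℝ} (hac : a < c)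
    (hg : ContinuousOn g (Icc a c)) (hdiff : DifferentiableOn ℝ g (Ioo a c))
    (hg' : ContinuousOn (deriv g) (Icc a c)) : HasDerivWithinAt g (deriv g a) (Icc a c) a := by
  have ha : a ∈ Icc a c := left_mem_Icc.2 hac.le
  refine (hasDerivWithinAt_Ici_of_tendsto_deriv hdiff ((hg a ha).mono Ioo_subset_Icc_self)
    (Ioo_mem_nhdsGT hac) ?_).mono Icc_subset_Ici_self
  rw [← nhdsWithin_Ioo_eq_nhdsGT hac]
  exact (hg' a ha).mono Ioo_subset_Icc_self

lemma hasDerivWithinAt_Icc_right_of_continuousOn_deriv {g : ℝ → ℝ} {a c : ℝ} (hac : a < c)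
    (hg : ContinuousOn g (Icc a c)) (hdiff : DifferentiableOn ℝ g (Ioo a c))
    (hg' : ContinuousOn (deriv g) (Icc a c)) : HasDerivWithinAt g (deriv g c) (Icc a c) c := by
  have hc : c ∈ Icc a c := right_mem_Icc.2 hac.le
  refine (hasDerivWithinAt_Iic_of_tendsto_deriv hdiff ((hg c hc).mono Ioo_subset_Icc_self)
    (Ioo_mem_nhdsLT hac) ?_).mono Icc_subset_Iic_self
  rw [← nhdsWithin_Ioo_eq_nhdsLT hac]
  exact (hg' c hc).mono Ioo_subset_Icc_self

lemma mul_sub_pos_iff_of_strictMonoOn {g : ℝ → ℝ} {S : Set ℝ} (hg : StrictMonoOn g S) (s : ℝ)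
    {x y : ℝ} (hx : x ∈ S) (hy : y ∈ S) : 0 < s * (g y - g x) ↔ 0 < s * (y - x) := by
  rcases lt_trichotomy s 0 with hs | rfl | hs
  · simp only [← smul_eq_mul, smul_pos_iff_of_neg_left hs, sub_neg, hg.lt_iff_lt hy hx]
  · simp
  · simp only [mul_pos_iff_of_pos_left hs, sub_pos, hg.lt_iff_lt hx hy]

lemma tendsto_of_strictAnti_of_tendsto_comp {ι α β : Type*} [LinearOrder α] [TopologicalSpace α]
    [OrderTopology α] [LinearOrder β] [TopologicalSpace β] [OrderTopology β] {l : Filter ι}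
    {g : α → β} (hg : StrictAnti g) {u : ι → α} {a : α}
    (hu : Tendsto (fun i => g (u i)) l (𝓝 (g a))) : Tendsto u l (𝓝 a) :=
  tendsto_order.2
    ⟨fun _ hc => (hu.eventually_lt_const (hg hc)).mono fun _ => hg.lt_iff_gt.1,
      fun _ hc => (hu.eventually_const_lt (hg hc)).mono fun _ => hg.lt_iff_gt.1⟩

lemma abs_zero_extension_sub_le {g : ℝ → ℝ} (hg : Antitone g) {b ω x w : ℝ} (hgω : g ω = 0) :
    |(if x ≤ b then w else 0) - (if x ≤ ω then g x else 0)| ≤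
      (if x ≤ b then |w - g x| else 0) + |g b| := by
  split_ifs with hxb hxω hxω
  · exact le_add_of_nonneg_right (abs_nonneg _)
  · have hx_nonpos : g x ≤ 0 := hgω ▸ hg (not_le.1 hxω).le
    have hb_le : g b ≤ g x := hg hxb
    calc |w - 0| = |(w - g x) + g x| := by ring_nf
      _ ≤ |w - g x| + |g x| := abs_add_le _ _
      _ ≤ |w - g x| + |g b| := add_le_add_right (abs_le_abs_of_nonpos hx_nonpos hb_le) _
  · have hx_nonneg : 0 ≤ g x := hgω ▸ hg hxω
    have hle : g x ≤ g b := hg (not_le.1 hxb).le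
    rw [zero_sub, abs_neg, zero_add]
    exact abs_le_abs_of_nonneg hx_nonneg hle
  · simp

/-! ### First zeros -/

lemma exists_first_zero {α : Type*} [TopologicalSpace α] [T2Space α] {S : Set α}
    (hS : IsCompact S) {F : α → ℝ → ℝ}
    (hF : ContinuousOn (fun p : α × ℝ => F p.1 p.2) (S ×ˢ Ici 0))
    (hinit : ∀ x ∈ S, 0 < F x 0) {y : α} {T : ℝ} (hy : y ∈ S) (hT : 0 ≤ T) (hyT : F y T ≤ 0) :
    ∃ t > 0, (∃ x ∈ S, F x t = 0) ∧ ∀ r ∈ Icc 0 t, ∀ x ∈ S, 0 ≤ F x r := by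
  let K : Set (α × ℝ) := (S ×ˢ Icc 0 T) ∩ (fun p => F p.1 p.2) ⁻¹' Iic 0
  have hK : IsCompact K :=
    (hS.prod isCompact_Icc).of_isClosed_subset
      ((hF.mono (prod_mono_right Icc_subset_Ici_self)).preimage_isClosed_of_isClosed
        (hS.isClosed.prod isClosed_Icc) isClosed_Iic) inter_subset_left
  obtain ⟨_, ⟨⟨x, t⟩, ⟨⟨hx, ht⟩, hxt⟩, rfl⟩, hleast⟩ :=
    (hK.image continuous_snd).exists_isLeast ⟨T, (y, T), ⟨⟨hy, hT, le_rfl⟩, hyT⟩, rfl⟩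
  have ht_pos : 0 < t := ht.1.lt_of_ne' fun ht_zero : t = 0 => (hinit x hx).not_ge (ht_zero ▸ hxt)
  have hpos_before : ∀ r ∈ Ico 0 t, ∀ z ∈ S, 0 < F z r := fun r hr z hz => by
    by_contra! hzr
    exact hr.2.not_ge (hleast ⟨(z, r), ⟨⟨hz, hr.1, hr.2.le.trans ht.2⟩, hzr⟩, rfl⟩)
  have hnonneg_at : ∀ z ∈ S, 0 ≤ F z t := fun z hz => by
    have hcont : ContinuousOn (F z) (Ici 0) :=
      hF.comp (f := fun r : ℝ => (z, r)) (by fun_prop) fun r hr => ⟨hz, hr⟩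
    refine ge_of_tendsto ((hcont.continuousAt (Ici_mem_nhds ht_pos)).tendsto.mono_left
      (nhdsWithin_le_nhds (s := Iio t))) ?_
    filter_upwards [Ico_mem_nhdsLT ht_pos] with r hr using (hpos_before r hr z hz).le
  refine ⟨t, ht_pos, ⟨x, hx, le_antisymm hxt (hnonneg_at x hx)⟩, fun r hr z hz => ?_⟩
  rcases hr.2.eq_or_lt with rfl | hrt
  · exact hnonneg_at z hz
  · exact (hpos_before r ⟨hr.1, hrt⟩ z hz).le

/-- `(x, t)` is a zero of `Z` on the moving domain `0 ≤ x ≤ b t`, at the first time at which one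
occurs: `Z` is nonnegative on the domain up to time `t`, and `t > 0`. -/
structure IsFirstZero (Z : ℝ → ℝ → ℝ) (b : ℝ → ℝ) (x t : ℝ) : Prop where
  time_pos : 0 < t
  mem : x ∈ Icc 0 (b t)
  eq_zero : Z x t = 0
  nonneg : ∀ r ∈ Icc 0 t, ∀ y ∈ Icc 0 (b r), 0 ≤ Z y r

namespace IsFirstZero

variable {Z : ℝ → ℝ → ℝ} {b : ℝ → ℝ} {x t z' : ℝ}

lemma isMinOn (hz : IsFirstZero Z b x t) : IsMinOn (fun y => Z y t) (Icc 0 (b t)) x := by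
  intro y hy
  simpa only [mem_ofPred_eq, hz.eq_zero] using hz.nonneg t ⟨hz.time_pos.le, le_rfl⟩ y hy

lemma deriv_time_nonpos (hz : IsFirstZero Z b x t) (hb : ContinuousAt b t) (hx : x < b t)
    (hZ : HasDerivAt (Z x) z' t) : z' ≤ 0 := by
  refine nonpos_of_isLocalMinOn_Icc_right hz.time_pos ?_ hZ.hasDerivWithinAt
  filter_upwards [self_mem_nhdsWithin,
    nhdsWithin_le_nhds (hb.eventually (lt_mem_nhds hx))] with r hr hxr
  simpa only [hz.eq_zero] using hz.nonneg r hr x ⟨hz.mem.1, hxr.le⟩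

lemma deriv_boundary_nonpos (hz : IsFirstZero Z b (b t) t) (hb : ∀ r ≥ 0, 0 ≤ b r)
    (hZ : HasDerivAt (fun r => Z (b r) r) z' t) : z' ≤ 0 := by
  refine nonpos_of_isLocalMinOn_Icc_right hz.time_pos (IsMinOn.localize ?_) hZ.hasDerivWithinAt
  intro r hr
  simpa only [mem_ofPred_eq, hz.eq_zero] using hz.nonneg r hr (b r) ⟨hb r hr.1, le_rfl⟩

end IsFirstZero

lemma pos_of_forall_not_isFirstZero {Z : ℝ → ℝ → ℝ} {b : ℝ → ℝ} (hb : ContinuousOn b (Ici 0))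
    (hb_pos : ∀ t ≥ 0, 0 < b t)
    (hZ : ContinuousOn (fun p : ℝ × ℝ => Z p.1 p.2) {p | 0 ≤ p.2 ∧ 0 ≤ p.1 ∧ p.1 ≤ b p.2})
    (hinit : ∀ x ∈ Icc 0 (b 0), 0 < Z x 0) (hno : ∀ x t, ¬ IsFirstZero Z b x t) :
    ∀ t ≥ 0, ∀ x ∈ Icc 0 (b t), 0 < Z x t := by
  intro T hT y hy
  by_contra! hyT
  have hrescale : ∀ r ≥ 0, ∀ z ∈ Icc 0 (b r), z / b r ∈ Icc 0 1 ∧ z / b r * b r = z :=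
    fun r hr z hz => ⟨⟨div_nonneg hz.1 (hb_pos r hr).le, div_le_one_of_le₀ hz.2 (hb_pos r hr).le⟩,
      div_mul_cancel₀ z (hb_pos r hr).ne'⟩
  have hmem : ∀ r ≥ 0, ∀ ξ ∈ Icc (0 : ℝ) 1, ξ * b r ∈ Icc 0 (b r) := fun r hr ξ hξ =>
    ⟨mul_nonneg hξ.1 (hb_pos r hr).le, mul_le_of_le_one_left (hb_pos r hr).le hξ.2⟩
  have hF : ContinuousOn (fun p : ℝ × ℝ => Z (p.1 * b p.2) p.2) (Icc 0 1 ×ˢ Ici 0) :=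
    hZ.comp (f := fun p : ℝ × ℝ => (p.1 * b p.2, p.2))
      ((continuousOn_fst.mul (hb.comp continuousOn_snd fun p hp => hp.2)).prodMk continuousOn_snd)
      fun p hp => ⟨hp.2, hmem p.2 hp.2 p.1 hp.1⟩
  obtain ⟨hyT_mem, hyT_eq⟩ := hrescale T hT y hy
  obtain ⟨t, ht, ⟨ξ, hξ, hzero⟩, hnonneg⟩ :=
    exists_first_zero (F := fun ξ r => Z (ξ * b r) r) isCompact_Icc hF
      (fun ξ hξ => hinit _ (hmem 0 le_rfl ξ hξ)) hyT_mem hT (by rwa [hyT_eq])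
  refine hno (ξ * b t) t ⟨ht, hmem t ht.le ξ hξ, hzero, fun r hr z hz => ?_⟩
  obtain ⟨hz_mem, hz_eq⟩ := hrescale r hr.1 z hz
  simpa only [hz_eq] using hnonneg r hr _ hz_mem

/-! ### Classical solutions -/

namespace IsClassicalSol21

variable {h b0 t x : ℝ} {u0 : ℝ → ℝ} {W : ℝ → ℝ → ℝ} {b : ℝ → ℝ}

lemma continuousOn_boundary (hsol : IsClassicalSol21 h b0 u0 W b) : ContinuousOn b (Ici 0) :=
  hsol.1.continuousOn

lemma boundary_init (hsol : IsClassicalSol21 h b0 u0 W b) : b 0 = b0 :=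
  hsol.2.1

lemma continuousOn (hsol : IsClassicalSol21 h b0 u0 W b) :
    ContinuousOn (fun p : ℝ × ℝ => W p.1 p.2) {p | 0 ≤ p.2 ∧ 0 ≤ p.1 ∧ p.1 ≤ b p.2} :=
  hsol.2.2.1

lemma differentiableAt_time (hsol : IsClassicalSol21 h b0 u0 W b) (ht : 0 < t)
    (hx : x ∈ Ioo 0 (b t)) : DifferentiableAt ℝ (W x) t :=
  (hsol.2.2.2.2.1 t ht x hx.1 hx.2).1

lemma differentiableAt_space (hsol : IsClassicalSol21 h b0 u0 W b) (ht : 0 < t)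
    (hx : x ∈ Ioo 0 (b t)) : DifferentiableAt ℝ (fun y => W y t) x :=
  (hsol.2.2.2.2.1 t ht x hx.1 hx.2).2.1

lemma hasDerivAt_deriv_space (hsol : IsClassicalSol21 h b0 u0 W b) (ht : 0 < t)
    (hx : x ∈ Ioo 0 (b t)) : HasDerivAt (deriv fun y => W y t)
      (deriv (W x) t - x / 2 * deriv (fun y => W y t) x) x := by
  obtain ⟨-, -, hdiff, hpde⟩ := hsol.2.2.2.2.1 t ht x hx.1 hx.2
  exact hdiff.hasDerivAt.congr_deriv (by linarith)

lemma apply_boundary (hsol : IsClassicalSol21 h b0 u0 W b) (ht : 0 < t) : W (b t) t = 0 :=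
  hsol.2.2.2.2.2.2.1 t ht

lemma hasDerivAt_boundary (hsol : IsClassicalSol21 h b0 u0 W b) (ht : 0 < t) :
    HasDerivAt b (-deriv (fun y => W y t) (b t) - b t / 2) t := by
  have hdiff : DifferentiableAt ℝ b t :=
    (hsol.1.differentiableOn one_ne_zero).differentiableAt (Ici_mem_nhds ht)
  have hstefan := hsol.2.2.2.2.2.2.2.1 t ht
  exact hdiff.hasDerivAt.congr_deriv (by linarith)

lemma deriv_space_zero (hsol : IsClassicalSol21 h b0 u0 W b) (ht : 0 < t) :
    deriv (fun y => W y t) 0 = -h :=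
  neg_eq_iff_eq_neg.1 (hsol.2.2.2.2.2.1 t ht)

lemma continuousOn_space (hsol : IsClassicalSol21 h b0 u0 W b) (ht : 0 ≤ t) :
    ContinuousOn (fun y => W y t) (Icc 0 (b t)) :=
  hsol.continuousOn.comp (f := fun y : ℝ => (y, t)) (by fun_prop) fun _ hy => ⟨ht, hy⟩

lemma continuousOn_deriv_space (hsol : IsClassicalSol21 h b0 u0 W b) (ht : 0 < t) :
    ContinuousOn (deriv fun y => W y t) (Icc 0 (b t)) :=
  hsol.2.2.2.1.comp (f := fun y : ℝ => (y, t)) (by fun_prop) fun _ hy => ⟨ht, hy⟩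

-- If the boundary ever reached `0`, both boundary conditions would hold there, so `b' = h > 0`.
lemma boundary_pos (hsol : IsClassicalSol21 h b0 u0 W b) (hh : 0 < h) (hb0 : 0 < b0) :
    ∀ t ≥ 0, 0 < b t := by
  intro T hT
  by_contra! hbT
  obtain ⟨t, ht, ⟨-, -, hbt⟩, hnonneg⟩ :=
    exists_first_zero (S := univ) (F := fun (_ : Unit) r => b r) isCompact_univ
      (hsol.continuousOn_boundary.comp continuousOn_snd fun p hp => hp.2)
      (fun _ _ => hsol.boundary_init.symm ▸ hb0) (mem_univ ()) hT hbT
  have hmin : IsMinOn b (Icc 0 t) t := fun r hr => by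
    simpa only [mem_ofPred_eq, hbt] using hnonneg r hr () trivial
  have hderiv := nonpos_of_isLocalMinOn_Icc_right ht hmin.localize
    (hsol.hasDerivAt_boundary ht).hasDerivWithinAt
  rw [hbt, hsol.deriv_space_zero ht] at hderiv
  linarith

lemma hasDerivWithinAt_space_zero (hsol : IsClassicalSol21 h b0 u0 W b) (ht : 0 < t)
    (hbt : 0 < b t) : HasDerivWithinAt (fun y => W y t) (-h) (Icc 0 (b t)) 0 :=
  hsol.deriv_space_zero ht ▸ hasDerivWithinAt_Icc_left_of_continuousOn_deriv hbt
    (hsol.continuousOn_space ht.le)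
    (fun _ hy => (hsol.differentiableAt_space ht hy).differentiableWithinAt)
    (hsol.continuousOn_deriv_space ht)

lemma hasDerivWithinAt_space_boundary (hsol : IsClassicalSol21 h b0 u0 W b) (ht : 0 < t)
    (hbt : 0 < b t) :
    HasDerivWithinAt (fun y => W y t) (deriv (fun y => W y t) (b t)) (Icc 0 (b t)) (b t) :=
  hasDerivWithinAt_Icc_right_of_continuousOn_deriv hbt (hsol.continuousOn_space ht.le)
    (fun _ hy => (hsol.differentiableAt_space ht hy).differentiableWithinAt)
    (hsol.continuousOn_deriv_space ht)

end IsClassicalSol21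

/-! ### Comparison with strict barriers -/

/-- `A t - f x` is a strict barrier for problem (2.1) with flux `h` along the free boundary `b`:
a strict supersolution if `s > 0`, a strict subsolution if `s < 0`. The arguments `A'`, `f'` and
`f''` are the derivatives of `A` and `f`. The conditions at the free boundary are imposed only
at times when the barrier vanishes at `b t`; there `stefan` compares the velocity `A' / f'` of the
zero of the barrier with the velocity `f' - b / 2` which the Stefan condition would give it. -/
structure IsStrictBarrier (s h : ℝ) (b A A' f f' f'' : ℝ → ℝ) : Prop where
  hasDerivAt_time : ∀ t, HasDerivAt A (A' t) t
  hasDerivAt_space : ∀ x, HasDerivAt f (f' x) x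
  hasDerivAt_deriv_space : ∀ x, HasDerivAt f' (f'' x) x
  interior : ∀ t > 0, ∀ x ∈ Ioo 0 (b t), 0 < s * (A' t + f'' x + x / 2 * f' x)
  flux : 0 < s * (f' 0 - h)
  slope_pos : ∀ t > 0, A t = f (b t) → 0 < f' (b t)
  stefan : ∀ t > 0, A t = f (b t) → 0 < s * (A' t + f' (b t) * (b t / 2 - f' (b t)))

/-- The signed gap between the barrier `A t - f x` and `W`, positive when `W` lies strictly on the
right side of the barrier: below it for `s > 0`, above it for `s < 0`. -/
def barrierGap (s : ℝ) (W : ℝ → ℝ → ℝ) (A f : ℝ → ℝ) (x t : ℝ) : ℝ :=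
  s * (A t - f x - W x t)

namespace IsStrictBarrier

variable {s h b0 x t : ℝ} {u0 : ℝ → ℝ} {W : ℝ → ℝ → ℝ} {b A A' f f' f'' : ℝ → ℝ}

lemma sign_ne_zero (hbar : IsStrictBarrier s h b A A' f f' f'') : s ≠ 0 :=
  left_ne_zero_of_mul hbar.flux.ne'

lemma hasDerivWithinAt_gap_space (hbar : IsStrictBarrier s h b A A' f f' f'') {S : Set ℝ}
    {W' : ℝ} (hW : HasDerivWithinAt (fun y => W y t) W' S x) :
    HasDerivWithinAt (fun y => barrierGap s W A f y t) (s * (-f' x - W')) S x :=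
  (((hbar.hasDerivAt_space x).hasDerivWithinAt.const_sub (A t)).sub hW).const_mul s

lemma not_isFirstZero_zero (hbar : IsStrictBarrier s h b A A' f f' f'')
    (hsol : IsClassicalSol21 h b0 u0 W b) (hb_pos : ∀ t ≥ 0, 0 < b t) :
    ¬ IsFirstZero (barrierGap s W A f) b 0 t := by
  intro hz
  have hbt : 0 < b t := hb_pos t hz.time_pos.le
  have hslope := nonneg_of_isLocalMinOn_Icc_left hbt hz.isMinOn.localize
    (hbar.hasDerivWithinAt_gap_space (hsol.hasDerivWithinAt_space_zero hz.time_pos hbt))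
  have hflux := hbar.flux
  linarith

lemma not_isFirstZero_boundary (hbar : IsStrictBarrier s h b A A' f f' f'')
    (hsol : IsClassicalSol21 h b0 u0 W b) (hb_pos : ∀ t ≥ 0, 0 < b t) :
    ¬ IsFirstZero (barrierGap s W A f) b (b t) t := by
  intro hz
  have ht : 0 < t := hz.time_pos
  have hbt : 0 < b t := hb_pos t ht.le
  set W' : ℝ := deriv (fun y => W y t) (b t)
  have hcontact : A t = f (b t) := by
    have hzero := (mul_eq_zero_iff_left hbar.sign_ne_zero).1 hz.eq_zero
    rw [hsol.apply_boundary ht] at hzero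
    linarith
  have hspace : s * (-f' (b t) - W') ≤ 0 :=
    nonpos_of_isLocalMinOn_Icc_right hbt hz.isMinOn.localize
      (hbar.hasDerivWithinAt_gap_space (hsol.hasDerivWithinAt_space_boundary ht hbt))
  have htime : s * (A' t - f' (b t) * (-W' - b t / 2)) ≤ 0 := by
    refine hz.deriv_boundary_nonpos (fun r hr => (hb_pos r hr).le) ?_
    refine (((hbar.hasDerivAt_time t).sub ((hbar.hasDerivAt_space (b t)).comp t
      (hsol.hasDerivAt_boundary ht))).const_mul s).congr_of_eventuallyEq ?_
    filter_upwards [Ioi_mem_nhds ht] with r hr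
    simp [barrierGap, hsol.apply_boundary hr]
  have hstefan := hbar.stefan t ht hcontact
  linarith [mul_nonpos_of_nonneg_of_nonpos (hbar.slope_pos t ht hcontact).le hspace]

lemma not_isFirstZero_interior (hbar : IsStrictBarrier s h b A A' f f' f'')
    (hsol : IsClassicalSol21 h b0 u0 W b) (hx : x ∈ Ioo 0 (b t)) :
    ¬ IsFirstZero (barrierGap s W A f) b x t := by
  intro hz
  have ht : 0 < t := hz.time_pos
  have hmin : IsLocalMin (fun y => barrierGap s W A f y t) x :=
    hz.isMinOn.isLocalMin (Icc_mem_nhds hx.1 hx.2)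
  have hderiv : ∀ y ∈ Ioo 0 (b t), HasDerivAt (fun y => barrierGap s W A f y t)
      (s * (-f' y - deriv (fun y => W y t) y)) y := fun y hy =>
    (((hbar.hasDerivAt_space y).const_sub (A t)).sub
      (hsol.differentiableAt_space ht hy).hasDerivAt).const_mul s
  have hslope : deriv (fun y => W y t) x = -f' x := by
    have hzero := (mul_eq_zero_iff_left hbar.sign_ne_zero).1
      (hmin.hasDerivAt_eq_zero (hderiv x hx))
    linarith
  have hspace : 0 ≤ s * (-f'' x - (deriv (W x) t - x / 2 * -f' x)) :=
    hslope ▸ nonneg_second_deriv_of_isLocalMin hmin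
      (eventually_of_mem (Ioo_mem_nhds hx.1 hx.2) hderiv)
      (((hbar.hasDerivAt_deriv_space x).neg.sub (hsol.hasDerivAt_deriv_space ht hx)).const_mul s)
  have htime : s * (A' t - deriv (W x) t) ≤ 0 :=
    hz.deriv_time_nonpos (hsol.hasDerivAt_boundary ht).continuousAt hx.2
      ((((hbar.hasDerivAt_time t).sub_const (f x)).sub
        (hsol.differentiableAt_time ht hx).hasDerivAt).const_mul s)
  have hint := hbar.interior t ht x hx
  linarith

theorem gap_pos (hbar : IsStrictBarrier s h b A A' f f' f'')
    (hsol : IsClassicalSol21 h b0 u0 W b) (hh : 0 < h) (hb0 : 0 < b0)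
    (hinit : ∀ x ∈ Icc 0 b0, 0 < barrierGap s W A f x 0) :
    ∀ t ≥ 0, ∀ x ∈ Icc 0 (b t), 0 < barrierGap s W A f x t := by
  have hb_pos := hsol.boundary_pos hh hb0
  have hA : Continuous A := continuous_iff_continuousAt.2 fun t =>
    (hbar.hasDerivAt_time t).continuousAt
  have hf : Continuous f := continuous_iff_continuousAt.2 fun x =>
    (hbar.hasDerivAt_space x).continuousAt
  have hgap : ContinuousOn (fun p : ℝ × ℝ => barrierGap s W A f p.1 p.2)
      {p | 0 ≤ p.2 ∧ 0 ≤ p.1 ∧ p.1 ≤ b p.2} :=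
    continuousOn_const.mul
      (((hA.comp continuous_snd).sub (hf.comp continuous_fst)).continuousOn.sub hsol.continuousOn)
  refine pos_of_forall_not_isFirstZero hsol.continuousOn_boundary hb_pos hgap
    (hsol.boundary_init.symm ▸ hinit) fun x t hz => ?_
  rcases hz.mem.1.eq_or_lt with rfl | hx_pos
  · exact hbar.not_isFirstZero_zero hsol hb_pos hz
  rcases hz.mem.2.eq_or_lt with rfl | hx_lt
  · exact hbar.not_isFirstZero_boundary hsol hb_pos hz
  · exact hbar.not_isFirstZero_interior hsol ⟨hx_pos, hx_lt⟩ hz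

end IsStrictBarrier

/-! ### Barriers decaying to a stationary profile -/

lemma isStrictBarrier_line {h B : ℝ} (hh : 0 < h) (hB : 2 * (h + 1) < B) (b : ℝ → ℝ) :
    IsStrictBarrier 1 h b (fun _ => (h + 1) * B) (fun _ => 0) (fun x => (h + 1) * x)
      (fun _ => h + 1) (fun _ => 0) where
  hasDerivAt_time t := hasDerivAt_const t _
  hasDerivAt_space x := by simpa using (hasDerivAt_id x).const_mul (h + 1)
  hasDerivAt_deriv_space x := hasDerivAt_const x _
  interior t _ x hx := by
    have hx_pos : 0 < x := hx.1
    simp only [zero_add, one_mul]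
    positivity
  flux := by simp
  slope_pos _ _ _ := by positivity
  stefan t _ hcontact := by
    rw [← mul_left_cancel₀ (by positivity) hcontact, zero_add, one_mul]
    exact mul_pos (by positivity) (by linarith)

lemma isStrictBarrier_add_exp {s h a ε C k : ℝ} {b f f' f'' : ℝ → ℝ}
    (hf : ∀ x, HasDerivAt f (f' x) x) (hf' : ∀ x, HasDerivAt f' (f'' x) x)
    (hC : 0 < C) (hk : 0 < k) (hkC : k * C < ε)
    (hinterior : ∀ x > 0, ε ≤ s * (f'' x + x / 2 * f' x)) (hflux : 0 < s * (f' 0 - h))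
    (hslope : ∀ t > 0, 0 < s * (f (b t) - a) → 0 < f' (b t))
    (hstefan : ∀ t > 0, 0 < s * (f (b t) - a) → ε ≤ s * (f' (b t) * (b t / 2 - f' (b t)))) :
    IsStrictBarrier s h b (fun t => a + s⁻¹ * (C * Real.exp (-k * t)))
      (fun t => s⁻¹ * -(k * C * Real.exp (-k * t))) f f' f'' := by
  have hs : s ≠ 0 := left_ne_zero_of_mul hflux.ne'
  have htime : ∀ t > 0, -ε < s * (s⁻¹ * -(k * C * Real.exp (-k * t))) := fun t ht => by
    have hexp : Real.exp (-k * t) ≤ 1 := Real.exp_le_one_iff.2 (by nlinarith)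
    rw [mul_inv_cancel_left₀ hs, neg_lt_neg_iff]
    exact (mul_le_of_le_one_right (by positivity) hexp).trans_lt hkC
  have hcontact_sign : ∀ t, a + s⁻¹ * (C * Real.exp (-k * t)) = f (b t) →
      0 < s * (f (b t) - a) := fun t hcontact => by
    rw [← hcontact, add_sub_cancel_left, mul_inv_cancel_left₀ hs]
    positivity
  exact
    { hasDerivAt_time := fun t => by
        have hexp : HasDerivAt (fun t => Real.exp (-k * t)) (Real.exp (-k * t) * (-k)) t := by
          simpa using ((hasDerivAt_id t).const_mul (-k)).exp
        exact (((hexp.const_mul C).const_mul s⁻¹).const_add a).congr_deriv (by ring)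
      hasDerivAt_space := hf
      hasDerivAt_deriv_space := hf'
      interior := fun t ht x hx => by linarith [htime t ht, hinterior x hx.1]
      flux := hflux
      slope_pos := fun t ht hcontact => hslope t ht (hcontact_sign t hcontact)
      stefan := fun t ht hcontact => by
        linarith [htime t ht, hstefan t ht (hcontact_sign t hcontact)] }

namespace IsClassicalSol21

variable {h b0 s : ℝ} {u0 : ℝ → ℝ} {W : ℝ → ℝ → ℝ} {b : ℝ → ℝ}

lemma exists_mul_sub_lt_init (hsol : IsClassicalSol21 h b0 u0 W b) {g : ℝ → ℝ}
    (hg : Continuous g) (s : ℝ) : ∃ C > 0, ∀ x ∈ Icc 0 b0, s * (W x 0 - g x) < C := by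
  have hcont : ContinuousOn (fun x => s * (W x 0 - g x)) (Icc 0 b0) :=
    hsol.boundary_init ▸
      continuousOn_const.mul ((hsol.continuousOn_space le_rfl).sub hg.continuousOn)
  obtain ⟨M, hM⟩ := isCompact_Icc.exists_bound_of_continuousOn hcont
  refine ⟨|M| + 1, by positivity, fun x hx => ?_⟩
  calc s * (W x 0 - g x) ≤ M := (le_abs_self _).trans (hM x hx)
    _ < |M| + 1 := (le_abs_self M).trans_lt (lt_add_one _)

lemma exists_boundary_le (hsol : IsClassicalSol21 h b0 u0 W b) (hh : 0 < h) (hb0 : 0 < b0) :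
    ∃ B, ∀ t > 0, b t ≤ B := by
  obtain ⟨C, hC, hinit⟩ :=
    hsol.exists_mul_sub_lt_init (g := fun x => -((h + 1) * x)) (by fun_prop) 1
  set B : ℝ := 2 * (h + 1) + C
  have hB : C ≤ (h + 1) * B := by
    nlinarith [mul_pos hh hC]
  have hgap_pos := (isStrictBarrier_line hh (lt_add_of_pos_right _ hC) b).gap_pos hsol hh hb0
    fun x hx => by
      simp only [barrierGap]
      linarith [hinit x hx]
  refine ⟨B, fun t ht => ?_⟩
  have hgap := hgap_pos t ht.le (b t) (right_mem_Icc.2 (hsol.boundary_pos hh hb0 t ht.le).le)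
  simp only [barrierGap, hsol.apply_boundary ht, one_mul, sub_zero, sub_pos] at hgap
  exact (lt_of_mul_lt_mul_left hgap (by positivity)).le

theorem exists_mul_sub_lt_exp (hsol : IsClassicalSol21 h b0 u0 W b) (hh : 0 < h) (hb0 : 0 < b0)
    {f f' f'' : ℝ → ℝ} {a ε : ℝ} (hf : ∀ x, HasDerivAt f (f' x) x)
    (hf' : ∀ x, HasDerivAt f' (f'' x) x) (hε : 0 < ε)
    (hinterior : ∀ x > 0, ε ≤ s * (f'' x + x / 2 * f' x)) (hflux : 0 < s * (f' 0 - h))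
    (hslope : ∀ t > 0, 0 < s * (f (b t) - a) → 0 < f' (b t))
    (hstefan : ∀ t > 0, 0 < s * (f (b t) - a) → ε ≤ s * (f' (b t) * (b t / 2 - f' (b t)))) :
    ∃ C k, 0 < k ∧
      ∀ t ≥ 0, ∀ x ∈ Icc 0 (b t), s * (W x t - (a - f x)) < C * Real.exp (-k * t) := by
  have hs : s ≠ 0 := left_ne_zero_of_mul hflux.ne'
  have hf_cont : Continuous f := continuous_iff_continuousAt.2 fun x => (hf x).continuousAt
  obtain ⟨C, hC, hinit⟩ :=
    hsol.exists_mul_sub_lt_init (g := fun x => a - f x) (by fun_prop) s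
  -- The amplitude `C` absorbs the initial data; the decay must then be slow compared to `ε / C`.
  set k : ℝ := ε / (2 * C)
  have hk : 0 < k := by positivity
  have hkC : k * C < ε := by
    have hkC_eq : k * C = ε / 2 := by simp only [k]; field_simp
    linarith
  have hgap_eq : ∀ x t, barrierGap s W (fun t => a + s⁻¹ * (C * Real.exp (-k * t))) f x t
      = C * Real.exp (-k * t) - s * (W x t - (a - f x)) := fun x t => by
    simp only [barrierGap]
    field_simp
    ring
  have hgap_pos := (isStrictBarrier_add_exp hf hf' hC hk hkC hinterior hflux hslope hstefan).gap_pos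
    hsol hh hb0 fun x hx => by
      simpa only [hgap_eq, mul_zero, Real.exp_zero, mul_one, sub_pos] using hinit x hx
  refine ⟨C, k, hk, fun t ht x hx => ?_⟩
  simpa only [hgap_eq, sub_pos] using hgap_pos t ht x hx

end IsClassicalSol21

/-! ### Steady states and their perturbations -/

/-- The primitive of `exp (-s ^ 2 / 4)` vanishing at `0`; the solutions of the stationary equation
are the affine functions of it. -/
noncomputable def gaussianPrimitive (x : ℝ) : ℝ :=
  ∫ s in (0 : ℝ)..x, Real.exp (-s ^ 2 / 4)

/-- The steady state of problem (2.1) with flux `h` and free boundary `ω`, as a function on all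
of `ℝ`. -/
noncomputable def steadyProfile (h ω x : ℝ) : ℝ :=
  h * ∫ s in x..ω, Real.exp (-s ^ 2 / 4)

/-- The spatial part of the barriers near the steady state: for `δ = 0` it is, up to sign and an
additive constant, the steady state itself, and `δ` is the amount by which its flux and the
stationary equation are perturbed. -/
noncomputable def perturbedProfile (h δ x : ℝ) : ℝ :=
  (h + δ) * gaussianPrimitive x + δ * x ^ 2 / 2

/-- The derivative of `perturbedProfile h δ`. -/
noncomputable def perturbedSlope (h δ x : ℝ) : ℝ :=
  (h + δ) * Real.exp (-x ^ 2 / 4) + δ * x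

lemma continuous_exp_neg_sq_div_four : Continuous fun s : ℝ => Real.exp (-s ^ 2 / 4) := by
  fun_prop

lemma hasDerivAt_gaussianPrimitive (x : ℝ) :
    HasDerivAt gaussianPrimitive (Real.exp (-x ^ 2 / 4)) x :=
  continuous_exp_neg_sq_div_four.integral_hasStrictDerivAt 0 x |>.hasDerivAt

lemma strictMono_gaussianPrimitive : StrictMono gaussianPrimitive :=
  strictMono_of_hasDerivAt_pos hasDerivAt_gaussianPrimitive fun _ => Real.exp_pos _

lemma gaussianPrimitive_nonneg {x : ℝ} (hx : 0 ≤ x) : 0 ≤ gaussianPrimitive x :=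
  intervalIntegral.integral_nonneg hx fun _ _ => (Real.exp_pos _).le

lemma steadyProfile_eq (h ω x : ℝ) :
    steadyProfile h ω x = h * (gaussianPrimitive ω - gaussianPrimitive x) := by
  rw [steadyProfile, gaussianPrimitive, gaussianPrimitive,
    intervalIntegral.integral_interval_sub_left] <;>
  exact continuous_exp_neg_sq_div_four.intervalIntegrable _ _

lemma steadyProfile_self (h ω : ℝ) : steadyProfile h ω ω = 0 := by
  simp [steadyProfile]

lemma strictAnti_steadyProfile {h : ℝ} (hh : 0 < h) (ω : ℝ) : StrictAnti (steadyProfile h ω) := by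
  intro x y hxy
  rw [steadyProfile_eq, steadyProfile_eq]
  exact mul_lt_mul_of_pos_left (sub_lt_sub_left (strictMono_gaussianPrimitive hxy) _) hh

lemma hasDerivAt_perturbedProfile (h δ x : ℝ) :
    HasDerivAt (perturbedProfile h δ) (perturbedSlope h δ x) x := by
  refine (((hasDerivAt_gaussianPrimitive x).const_mul (h + δ)).add
    (((hasDerivAt_pow 2 x).const_mul δ).div_const 2)).congr_deriv ?_
  simp only [perturbedSlope]
  ring

lemma hasDerivAt_perturbedSlope (h δ x : ℝ) :
    HasDerivAt (perturbedSlope h δ) (δ - x / 2 * ((h + δ) * Real.exp (-x ^ 2 / 4))) x := by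
  have hexp : HasDerivAt (fun x : ℝ => Real.exp (-x ^ 2 / 4))
      (Real.exp (-x ^ 2 / 4) * (-(2 * x) / 4)) x := by
    simpa using ((hasDerivAt_pow 2 x).neg.div_const 4).exp
  refine ((hexp.const_mul (h + δ)).add ((hasDerivAt_id x).const_mul δ)).congr_deriv ?_
  ring

lemma exp_neg_sq_div_four_le {x y : ℝ} (hx : 0 ≤ x) (hxy : x ≤ y) :
    Real.exp (-y ^ 2 / 4) ≤ Real.exp (-x ^ 2 / 4) := by
  gcongr

lemma strictMonoOn_half_sub_perturbedSlope {h δ : ℝ} (hδ : δ < 1 / 2) (hhδ : 0 ≤ h + δ) :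
    StrictMonoOn (fun x => x / 2 - perturbedSlope h δ x) (Ici 0) := by
  intro x hx y _ hxy
  have hexp : (h + δ) * Real.exp (-y ^ 2 / 4) ≤ (h + δ) * Real.exp (-x ^ 2 / 4) :=
    mul_le_mul_of_nonneg_left (exp_neg_sq_div_four_le hx hxy.le) hhδ
  have hlin : (1 / 2 - δ) * x < (1 / 2 - δ) * y := mul_lt_mul_of_pos_left hxy (sub_pos.2 hδ)
  simp only [perturbedSlope]
  linarith

lemma le_perturbedSlope {h δ B x : ℝ} (hδ : |δ| ≤ h) (hx : x ∈ Icc 0 B) :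
    (h - |δ|) * Real.exp (-B ^ 2 / 4) - |δ| * B ≤ perturbedSlope h δ x := by
  have hδ_ge : -|δ| ≤ δ := neg_abs_le δ
  have hexp : (h - |δ|) * Real.exp (-B ^ 2 / 4) ≤ (h + δ) * Real.exp (-x ^ 2 / 4) :=
    mul_le_mul (by linarith) (exp_neg_sq_div_four_le hx.1 hx.2) (Real.exp_pos _).le (by linarith)
  have hlin : -δ * x ≤ |δ| * B := mul_le_mul (neg_le_abs δ) hx.2 hx.1 (abs_nonneg δ)
  simp only [perturbedSlope]
  linarith

lemma half_sub_perturbedSlope_root {h ω : ℝ} (hroot : h = ω / 2 * Real.exp (ω ^ 2 / 4)) :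
    ω / 2 - perturbedSlope h 0 ω = 0 := by
  have hexp : Real.exp (ω ^ 2 / 4) * Real.exp (-ω ^ 2 / 4) = 1 := by
    rw [← Real.exp_add, ← add_div, add_neg_cancel, zero_div, Real.exp_zero]
  simp only [perturbedSlope, hroot, add_zero, zero_mul, mul_assoc, hexp, mul_one, sub_self]

lemma exists_near_root_mul_half_sub_perturbedSlope_pos {h ω s μ : ℝ} (hh : 0 < h) (hω : 0 < ω)
    (hroot : h = ω / 2 * Real.exp (ω ^ 2 / 4)) (hs : s ≠ 0) (hμ : 0 < μ) :
    ∃ l > 0, 0 < s * (l / 2 - perturbedSlope h 0 l) ∧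
      s * (perturbedProfile h 0 l - perturbedProfile h 0 ω) < μ := by
  have hprofile : Continuous (perturbedProfile h 0) :=
    continuous_iff_continuousAt.2 fun x => (hasDerivAt_perturbedProfile h 0 x).continuousAt
  have hl_pos : ∀ᶠ ε in 𝓝 (0 : ℝ), 0 < ω + s * ε :=
    Continuous.tendsto (by fun_prop) 0 |>.eventually_const_lt (by simpa)
  have hl_profile : ∀ᶠ ε in 𝓝 (0 : ℝ),
      s * (perturbedProfile h 0 (ω + s * ε) - perturbedProfile h 0 ω) < μ :=
    Continuous.tendsto (by fun_prop) 0 |>.eventually_lt_const (by simpa)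
  obtain ⟨ε, ⟨hl, hlμ⟩, hε⟩ := (((hl_pos.and hl_profile).filter_mono nhdsWithin_le_nhds).and
    (self_mem_nhdsWithin (s := Ioi (0 : ℝ)))).exists
  refine ⟨ω + s * ε, hl, ?_, hlμ⟩
  have hmono := strictMonoOn_half_sub_perturbedSlope (h := h) one_half_pos (by linarith)
  have hside : 0 < s * (ω + s * ε - ω) := by
    rw [add_sub_cancel_left, ← mul_assoc]
    exact mul_pos (mul_self_pos.2 hs) hε
  simpa only [half_sub_perturbedSlope_root hroot, sub_zero] using
    (mul_sub_pos_iff_of_strictMonoOn hmono s hω.le hl.le).2 hside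

lemma exists_pos_le_perturbedSlope {h : ℝ} (hh : 0 < h) (B : ℝ) :
    ∃ m > 0, ∀ᶠ δ in 𝓝 0, ∀ x ∈ Icc 0 B, m ≤ perturbedSlope h δ x := by
  refine ⟨h * Real.exp (-B ^ 2 / 4) / 2, by positivity, ?_⟩
  have hsmall : ∀ᶠ δ : ℝ in 𝓝 0, |δ| < h :=
    Continuous.tendsto (by fun_prop) 0 |>.eventually_lt_const (by simpa)
  have hlower : ∀ᶠ δ : ℝ in 𝓝 0, h * Real.exp (-B ^ 2 / 4) / 2 <
      (h - |δ|) * Real.exp (-B ^ 2 / 4) - |δ| * B :=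
    Continuous.tendsto (by fun_prop) 0 |>.eventually_const_lt
      (by simpa using half_lt_self (mul_pos hh (Real.exp_pos (-B ^ 2 / 4))))
  filter_upwards [hsmall, hlower] with δ hδ hm x hx using hm.le.trans (le_perturbedSlope hδ.le hx)

lemma exists_perturbation_of_mul_half_sub_perturbedSlope_pos {h l s a μ : ℝ} (hh : 0 < h)
    (hs : s ≠ 0) (hl : 0 < s * (l / 2 - perturbedSlope h 0 l))
    (hμ : s * (perturbedProfile h 0 l - a) < μ) (B : ℝ) :
    ∃ δ, 0 < s * δ ∧ δ < 1 / 2 ∧ 0 ≤ h + δ ∧ 0 < s * (l / 2 - perturbedSlope h δ l) ∧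
      s * (perturbedProfile h δ l - a) < μ ∧
      ∃ m > 0, ∀ x ∈ Icc 0 B, m ≤ perturbedSlope h δ x := by
  obtain ⟨m, hm, hlower⟩ := exists_pos_le_perturbedSlope hh B
  have hhalf : ∀ᶠ δ : ℝ in 𝓝 0, δ < 1 / 2 := gt_mem_nhds one_half_pos
  have hflux : ∀ᶠ δ : ℝ in 𝓝 0, 0 < h + δ :=
    Continuous.tendsto (by fun_prop) 0 |>.eventually_const_lt (by simpa)
  have hslope : ∀ᶠ δ : ℝ in 𝓝 0, 0 < s * (l / 2 - perturbedSlope h δ l) :=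
    Continuous.tendsto (by unfold perturbedSlope; fun_prop) 0 |>.eventually_const_lt hl
  have hprofile : ∀ᶠ δ : ℝ in 𝓝 0, s * (perturbedProfile h δ l - a) < μ :=
    Continuous.tendsto (by unfold perturbedProfile; fun_prop) 0 |>.eventually_lt_const hμ
  have hsε : Tendsto (fun ε => s * ε) (𝓝[>] 0) (𝓝 0) :=
    (Continuous.tendsto' (by fun_prop) _ _ (mul_zero s)).mono_left nhdsWithin_le_nhds
  obtain ⟨ε, ⟨hδ, hhδ, hlδ, hlδμ, hm_le⟩, hε⟩ := ((hsε.eventually (hhalf.and (hflux.and (hslope.and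
    (hprofile.and hlower))))).and self_mem_nhdsWithin).exists
  have hsign : 0 < s * (s * ε) := by
    rw [← mul_assoc]
    exact mul_pos (mul_self_pos.2 hs) hε
  exact ⟨s * ε, hsign, hδ, hhδ.le, hlδ, hlδμ, m, hm, hm_le⟩

-- Contact forces `x` to lie beyond `l` on the side given by `s`, and there the defect in the Stefan
-- condition has the right sign and only grows.
lemma mul_le_mul_perturbedSlope_of_contact {h δ s l m B x : ℝ} (hδ : δ < 1 / 2)
    (hhδ : 0 ≤ h + δ) (hl : 0 < s * (l / 2 - perturbedSlope h δ l)) (hm : 0 < m)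
    (hslope : ∀ x ∈ Icc 0 B, m ≤ perturbedSlope h δ x) (hlB : l ∈ Icc 0 B) (hxB : x ∈ Icc 0 B)
    (hcontact : 0 < s * (perturbedProfile h δ x - perturbedProfile h δ l)) :
    m * (s * (l / 2 - perturbedSlope h δ l)) ≤
      s * (perturbedSlope h δ x * (x / 2 - perturbedSlope h δ x)) := by
  have hmono : StrictMonoOn (perturbedProfile h δ) (Icc 0 B) := by
    refine strictMonoOn_of_hasDerivWithinAt_pos (convex_Icc 0 B)
      (fun y _ => (hasDerivAt_perturbedProfile h δ y).continuousAt.continuousWithinAt)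
      (fun y _ => (hasDerivAt_perturbedProfile h δ y).hasDerivWithinAt) fun y hy => ?_
    exact hm.trans_le (hslope y (interior_subset hy))
  have hside : 0 < s * (x - l) := (mul_sub_pos_iff_of_strictMonoOn hmono s hlB hxB).1 hcontact
  have hdefect := (mul_sub_pos_iff_of_strictMonoOn
    (strictMonoOn_half_sub_perturbedSlope hδ hhδ) s hlB.1 hxB.1).2 hside
  calc m * (s * (l / 2 - perturbedSlope h δ l))
      ≤ perturbedSlope h δ x * (s * (x / 2 - perturbedSlope h δ x)) :=
        mul_le_mul (hslope x hxB) (by linarith) hl.le (hm.le.trans (hslope x hxB))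
    _ = s * (perturbedSlope h δ x * (x / 2 - perturbedSlope h δ x)) := by ring

lemma mul_perturbedProfile_zero_le {h δ s x : ℝ} (hδ : 0 ≤ s * δ) (hx : 0 ≤ x) :
    s * perturbedProfile h 0 x ≤ s * perturbedProfile h δ x := by
  have hG := gaussianPrimitive_nonneg hx
  have hdiff : 0 ≤ s * δ * (gaussianPrimitive x + x ^ 2 / 2) := by positivity
  simp only [perturbedProfile]
  linarith

lemma steadyProfile_eq_perturbedProfile_sub (h ω x : ℝ) :
    steadyProfile h ω x = perturbedProfile h 0 ω - perturbedProfile h 0 x := by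
  rw [steadyProfile_eq, perturbedProfile, perturbedProfile]
  ring

/-! ### Convergence -/

namespace IsClassicalSol21

variable {h b0 ω s μ : ℝ} {u0 : ℝ → ℝ} {W : ℝ → ℝ → ℝ} {b : ℝ → ℝ}

lemma exists_mul_sub_perturbedProfile_lt_exp (hsol : IsClassicalSol21 h b0 u0 W b) (hh : 0 < h)
    (hb0 : 0 < b0) {δ l m B : ℝ} (hB : ∀ t > 0, b t ≤ B) (hsδ : 0 < s * δ) (hδ : δ < 1 / 2)
    (hhδ : 0 ≤ h + δ) (hl : 0 < s * (l / 2 - perturbedSlope h δ l)) (hm : 0 < m)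
    (hslope : ∀ x ∈ Icc 0 B, m ≤ perturbedSlope h δ x) (hlB : l ∈ Icc 0 B) :
    ∃ C k, 0 < k ∧ ∀ t ≥ 0, ∀ x ∈ Icc 0 (b t),
      s * (W x t - (perturbedProfile h δ l - perturbedProfile h δ x)) < C * Real.exp (-k * t) := by
  have hbB : ∀ t > 0, b t ∈ Icc 0 B := fun t ht =>
    ⟨(hsol.boundary_pos hh hb0 t ht.le).le, hB t ht⟩
  refine hsol.exists_mul_sub_lt_exp hh hb0 (hasDerivAt_perturbedProfile h δ)
    (hasDerivAt_perturbedSlope h δ) (lt_min hsδ (mul_pos hm hl)) (fun x _ => ?_) ?_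
    (fun t ht _ => hm.trans_le (hslope _ (hbB t ht)))
    fun t ht hcontact => min_le_of_right_le
      (mul_le_mul_perturbedSlope_of_contact hδ hhδ hl hm hslope hlB (hbB t ht) hcontact)
  · have hdefect : s * (δ - x / 2 * ((h + δ) * Real.exp (-x ^ 2 / 4))
        + x / 2 * perturbedSlope h δ x) = s * δ * (1 + x ^ 2 / 2) := by
      simp only [perturbedSlope]
      ring
    rw [hdefect]
    exact min_le_of_left_le (le_mul_of_one_le_right hsδ.le (by nlinarith))
  · simpa [perturbedSlope] using hsδ

lemma eventually_mul_sub_steadyProfile_lt (hsol : IsClassicalSol21 h b0 u0 W b) (hh : 0 < h)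
    (hb0 : 0 < b0) (hω : 0 < ω) (hroot : h = ω / 2 * Real.exp (ω ^ 2 / 4)) (hs : s ≠ 0)
    (hμ : 0 < μ) :
    ∀ᶠ t in atTop, ∀ x ∈ Icc 0 (b t), s * (W x t - steadyProfile h ω x) < μ := by
  obtain ⟨B, hB⟩ := hsol.exists_boundary_le hh hb0
  obtain ⟨l, hl_pos, hl, hlμ⟩ :=
    exists_near_root_mul_half_sub_perturbedSlope_pos hh hω hroot hs hμ
  obtain ⟨δ, hsδ, hδ, hhδ, hlδ, hlδμ, m, hm, hslope⟩ :=
    exists_perturbation_of_mul_half_sub_perturbedSlope_pos hh hs hl hlμ (max B l)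
  obtain ⟨C, k, hk, hbarrier⟩ := hsol.exists_mul_sub_perturbedProfile_lt_exp hh hb0
    (fun t ht => (hB t ht).trans (le_max_left B l)) hsδ hδ hhδ hlδ hm hslope
    ⟨hl_pos.le, le_max_right B l⟩
  have hdecay : Tendsto (fun t => C * Real.exp (-k * t)) atTop (𝓝 (C * 0)) :=
    (Real.tendsto_exp_atBot.comp (tendsto_id.const_mul_atTop_of_neg (neg_lt_zero.2 hk))).const_mul C
  rw [mul_zero] at hdecay
  filter_upwards [eventually_ge_atTop 0, hdecay.eventually_lt_const (sub_pos.2 hlδμ)]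
    with t ht hsmall x hx
  have hprofile := mul_perturbedProfile_zero_le (h := h) hsδ.le hx.1
  rw [steadyProfile_eq_perturbedProfile_sub]
  linarith [hbarrier t ht x hx]

lemma eventually_abs_sub_steadyProfile_lt (hsol : IsClassicalSol21 h b0 u0 W b) (hh : 0 < h)
    (hb0 : 0 < b0) (hω : 0 < ω) (hroot : h = ω / 2 * Real.exp (ω ^ 2 / 4)) (hμ : 0 < μ) :
    ∀ᶠ t in atTop, ∀ x ∈ Icc 0 (b t), |W x t - steadyProfile h ω x| < μ := by
  filter_upwards [hsol.eventually_mul_sub_steadyProfile_lt hh hb0 hω hroot one_ne_zero hμ,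
    hsol.eventually_mul_sub_steadyProfile_lt hh hb0 hω hroot (neg_ne_zero.2 one_ne_zero) hμ]
    with t hupper hlower x hx
  exact abs_lt.2 ⟨by linarith [hlower x hx], by linarith [hupper x hx]⟩

lemma tendsto_steadyProfile_boundary (hsol : IsClassicalSol21 h b0 u0 W b) (hh : 0 < h)
    (hb0 : 0 < b0) (hω : 0 < ω) (hroot : h = ω / 2 * Real.exp (ω ^ 2 / 4)) :
    Tendsto (fun t => steadyProfile h ω (b t)) atTop (𝓝 0) := by
  refine Metric.tendsto_nhds.2 fun μ hμ => ?_
  filter_upwards [eventually_gt_atTop 0,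
    hsol.eventually_abs_sub_steadyProfile_lt hh hb0 hω hroot hμ] with t ht hclose
  simpa [hsol.apply_boundary ht] using
    hclose (b t) (right_mem_Icc.2 (hsol.boundary_pos hh hb0 t ht.le).le)

lemma tendsto_boundary (hsol : IsClassicalSol21 h b0 u0 W b) (hh : 0 < h)
    (hb0 : 0 < b0) (hω : 0 < ω) (hroot : h = ω / 2 * Real.exp (ω ^ 2 / 4)) :
    Tendsto b atTop (𝓝 ω) := by
  refine tendsto_of_strictAnti_of_tendsto_comp (strictAnti_steadyProfile hh ω) ?_
  rw [steadyProfile_self]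
  exact hsol.tendsto_steadyProfile_boundary hh hb0 hω hroot

lemma tendstoUniformlyOn_steadyProfile (hsol : IsClassicalSol21 h b0 u0 W b) (hh : 0 < h)
    (hb0 : 0 < b0) (hω : 0 < ω) (hroot : h = ω / 2 * Real.exp (ω ^ 2 / 4)) {β : ℝ} (hβ : β < ω) :
    TendstoUniformlyOn (fun t x => W x t) (steadyProfile h ω) atTop (Icc 0 β) := by
  refine Metric.tendstoUniformlyOn_iff.2 fun μ hμ => ?_
  filter_upwards [(hsol.tendsto_boundary hh hb0 hω hroot).eventually_const_lt hβ,
    hsol.eventually_abs_sub_steadyProfile_lt hh hb0 hω hroot hμ] with t ht hclose x hx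
  rw [dist_comm]
  exact hclose x (Icc_subset_Icc_right ht.le hx)

lemma tendstoUniformlyOn_zero_extension (hsol : IsClassicalSol21 h b0 u0 W b) (hh : 0 < h)
    (hb0 : 0 < b0) (hω : 0 < ω) (hroot : h = ω / 2 * Real.exp (ω ^ 2 / 4)) :
    TendstoUniformlyOn (fun t x => if x ≤ b t then W x t else 0)
      (fun x => if x ≤ ω then steadyProfile h ω x else 0) atTop (Ici 0) := by
  refine Metric.tendstoUniformlyOn_iff.2 fun μ hμ => ?_
  have hboundary := (hsol.tendsto_steadyProfile_boundary hh hb0 hω hroot).abs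
  rw [abs_zero] at hboundary
  filter_upwards [hboundary.eventually_lt_const (half_pos hμ),
    hsol.eventually_abs_sub_steadyProfile_lt hh hb0 hω hroot (half_pos hμ)] with t hbt hclose x hx
  have hinside : (if x ≤ b t then |W x t - steadyProfile h ω x| else 0) < μ / 2 := by
    split_ifs with hxb
    · exact hclose x ⟨hx, hxb⟩
    · exact half_pos hμ
  rw [dist_comm]
  exact (abs_zero_extension_sub_le (strictAnti_steadyProfile hh ω).antitone
    (steadyProfile_self h ω)).trans_lt (by linarith)

end IsClassicalSol21

theorem convergence_to_steady_state_general {h b0 ω : ℝ} {u0 : ℝ → ℝ} {W : ℝ → ℝ → ℝ} {b : ℝ → ℝ}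
    {Winf : ℝ → ℝ} (hb0 : 0 < b0) (hsol : IsClassicalSol21 h b0 u0 W b) (hω : 0 < ω)
    (hroot : h = ω / 2 * Real.exp (ω ^ 2 / 4))
    (hWinf : ∀ η, Winf η = h * ∫ s in η..ω, Real.exp (-s ^ 2 / 4)) :
    Tendsto b atTop (𝓝 ω) ∧
    (∀ β < ω, TendstoUniformlyOn (fun τ η => W η τ) Winf atTop (Icc 0 β)) ∧
    TendstoUniformlyOn (fun τ η => if η ≤ b τ then W η τ else 0)
      (fun η => if η ≤ ω then Winf η else 0) atTop (Ici 0) := by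
  obtain rfl : Winf = steadyProfile h ω := funext hWinf
  have hh : 0 < h := hroot ▸ by positivity
  exact ⟨hsol.tendsto_boundary hh hb0 hω hroot,
    fun β hβ => hsol.tendstoUniformlyOn_steadyProfile hh hb0 hω hroot hβ,
    hsol.tendstoUniformlyOn_zero_extension hh hb0 hω hroot⟩

/-- Theorem 3.3: let `(W, b)` be the classical solution of (2.1) with data
`(h, u0, b0)`, where `u0 ∈ W^{1,∞}(0,∞)`, `u0 ≥ 0`, `u0 0 > 0`, `u0 = 0` on
`[b0, ∞)`, and let `(W^∞, b^∞) = (W^∞, ω)` be the unique steady state of (2.1).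
Then (a) `b τ → b^∞`; (b) `W(·, τ) → W^∞` uniformly on `[0, β]` for every
`β ∈ (0, b^∞)`; (c) the zero-extension of `W(·, τ)` converges uniformly on
compact subsets of `[0, ∞)` to the zero-extension of `W^∞`. -/
theorem convergence_to_steady_state
    (h b0 ω : ℝ) (hh : 0 < h) (hb0 : 0 < b0)
    (u0 : ℝ → ℝ)
    (hlip : ∃ M : NNReal, LipschitzOnWith M u0 (Set.Ici 0))
    (hbdd : ∃ C : ℝ, ∀ x ∈ Set.Ici (0:ℝ), |u0 x| ≤ C)
    (hpos : ∀ x ∈ Set.Ici (0:ℝ), 0 ≤ u0 x)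
    (hu00 : 0 < u0 0)
    (hzero : ∀ x ∈ Set.Ici b0, u0 x = 0)
    (W : ℝ → ℝ → ℝ) (b : ℝ → ℝ)
    (hsol : IsClassicalSol21 h b0 u0 W b)
    (hω : 0 < ω) (hroot : h = ω / 2 * Real.exp (ω ^ 2 / 4))
    (Winf : ℝ → ℝ)
    (hWinf : ∀ η, Winf η = h * ∫ s in η..ω, Real.exp (-s ^ 2 / 4)) :
    Filter.Tendsto b Filter.atTop (nhds ω) ∧
    (∀ β, 0 < β → β < ω →
      TendstoUniformlyOn (fun τ η => W η τ) Winf Filter.atTop (Set.Icc 0 β)) ∧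
    (∀ K : Set ℝ, IsCompact K → K ⊆ Set.Ici 0 →
      TendstoUniformlyOn (fun τ η => if η ≤ b τ then W η τ else 0)
        (fun η => if η ≤ ω then Winf η else 0) Filter.atTop K) := by
  obtain ⟨hb, hW, hext⟩ := convergence_to_steady_state_general hb0 hsol hω hroot hWinf
  exact ⟨hb, fun β _ hβ => hW β hβ, fun _ _ hK => hext.mono hK⟩
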